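/- Let T be a noncrossing tree on [n+1], let T_1, …, T_k be the noncrossing alternating spanning trees of the transitive closure T̄, indexed so that P(T_1) <lex ⋯ <lex P(T_k). Then for every 2 ≤ m ≤ k there is a nonempty set E_m ⊆ E(T_m) such that P(T_m) ∩ (P(T_1) ∪ ⋯ ∪ P(T_{m−1})) = ⋃_{e ∈ E_m} P(T_m − e), where T_m − e denotes T_m with the edge e removed; i.e., the lexicographic order is a shelling order: each P(T_m) meets the union of its predecessors in a nonempty union of facets of the simplex P(T_m). -/

import Mathlib

open scoped BigOperators

namespace RPaper

abbrev Vtype (n : ℕ) := Fin (n+1) → ℝ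

abbrev Edge (n : ℕ) := Fin (n+1) × Fin (n+1)

abbrev EdgeSet (n : ℕ) := Finset (Edge n)

/-- The vector `e_i - e_j`. -/
def ev {n : ℕ} (i j : Fin (n+1)) : Vtype n := Pi.single i 1 - Pi.single j 1

/-- Edges are stored as pairs `(i,j)` with `i < j`. -/
def IsGraph {n : ℕ} (E : EdgeSet n) : Prop := ∀ e ∈ E, e.1 < e.2

/-- The simple graph underlying an edge set. -/
def toSG {n : ℕ} (E : EdgeSet n) : SimpleGraph (Fin (n+1)) :=
  SimpleGraph.fromRel (fun a b => (a, b) ∈ E)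

def Acyclic {n : ℕ} (E : EdgeSet n) : Prop := (toSG E).IsAcyclic

def IsForest {n : ℕ} (E : EdgeSet n) : Prop := IsGraph E ∧ Acyclic E

/-- A tree on the full vertex set `[n+1]`: connected and acyclic. -/
def IsTreeG {n : ℕ} (E : EdgeSet n) : Prop := IsGraph E ∧ (toSG E).IsTree

def Noncrossing {n : ℕ} (E : EdgeSet n) : Prop :=
  ¬ ∃ i j k l : Fin (n+1), i < j ∧ j < k ∧ k < l ∧ (i, k) ∈ E ∧ (j, l) ∈ E

def Alternating {n : ℕ} (E : EdgeSet n) : Prop :=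
  ¬ ∃ i j k : Fin (n+1), i < j ∧ j < k ∧ (i, j) ∈ E ∧ (j, k) ∈ E

/-- The positive roots `e_i - e_j`, `i < j`. -/
def PhiPlus (n : ℕ) : Set (Vtype n) := {v | ∃ i j : Fin (n+1), i < j ∧ v = ev i j}

/-- The cone of nonnegative combinations of the vectors of `E`. -/
def cone {n : ℕ} (E : EdgeSet n) : Set (Vtype n) :=
  {x | ∃ c : Edge n → ℝ, (∀ e, 0 ≤ c e) ∧ x = ∑ e ∈ E, c e • ev e.1 e.2}

def Vbar {n : ℕ} (E : EdgeSet n) : Set (Vtype n) := PhiPlus n ∩ cone E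

/-- The root polytope of a graph. -/
def RootPoly {n : ℕ} (E : EdgeSet n) : Set (Vtype n) := convexHull ℝ ({0} ∪ Vbar E)

/-- The full root polytope `P(A_n^+)`. -/
def FullRootPoly (n : ℕ) : Set (Vtype n) := convexHull ℝ ({0} ∪ PhiPlus n)

/-- Transitive closure: `(i,j)`, `i<j`, whenever there is an increasing path in `E`. -/
def closureT {n : ℕ} (E : EdgeSet n) : Set (Edge n) :=
  {p | p.1 < p.2 ∧ Relation.TransGen (fun a b => a < b ∧ (a, b) ∈ E) p.1 p.2}

/-- Noncrossing alternating spanning trees of the transitive closure of `E`. -/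
def NCASpanningTrees {n : ℕ} (E : EdgeSet n) : Set (EdgeSet n) :=
  {F | IsTreeG F ∧ Noncrossing F ∧ Alternating F ∧ ↑F ⊆ closureT E}

/-- The `t`-th dilate of a set. -/
def dilate {n : ℕ} (t : ℕ) (P : Set (Vtype n)) : Set (Vtype n) := (fun x => (t : ℝ) • x) '' P

/-- Number of lattice points of the `t`-th dilate. -/
noncomputable def latticeCount {n : ℕ} (P : Set (Vtype n)) (t : ℕ) : ℕ :=
  Set.ncard {x ∈ dilate t P | ∀ i, ∃ z : ℤ, x i = (z : ℝ)}

/-- Dimension of the affine span of a set. -/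
noncomputable def polyDim {n : ℕ} (P : Set (Vtype n)) : ℕ :=
  Module.finrank ℝ (affineSpan ℝ P).direction

/-- The points `0` and `e_i - e_j`, `(i,j) ∈ F`. -/
def vertSet {n : ℕ} (F : EdgeSet n) : Set (Vtype n) :=
  {0} ∪ {v | ∃ e ∈ F, v = ev e.1 e.2}

/-- `e ≤ f` where edges are ordered by first coordinate, then second coordinate. -/
def edgeLE {n : ℕ} (e f : Edge n) : Prop :=
  e.1 < f.1 ∨ (e.1 = f.1 ∧ e.2 ≤ f.2)

/-- `A <lex B`: at the first position where the increasing edge lists of `A` and `B`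
differ, the edge of `A` is smaller; equivalently (for sets of equal size), the smallest
edge in the symmetric difference belongs to `A`. -/
def treeLexLT {n : ℕ} (A B : EdgeSet n) : Prop :=
  ∃ e ∈ A, e ∉ B ∧ ∀ f ∈ (A \ B) ∪ (B \ A), edgeLE e f

abbrev Rch {n : ℕ} (T : EdgeSet n) : Fin (n+1) → Fin (n+1) → Prop :=
  Relation.ReflTransGen (fun a b => a < b ∧ (a, b) ∈ T)

lemma Rch.le {n : ℕ} {T : EdgeSet n} {a b : Fin (n+1)} (h : Rch T a b) : a ≤ b := by
  induction h with
  | refl => exact le_rfl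
  | tail _ h ih => exact ih.trans h.1.le

lemma Rch.step {n : ℕ} {T : EdgeSet n} (P : Fin (n+1) → Prop) {a b : Fin (n+1)} (h : Rch T a b)
    (ha : P a) (hb : ¬ P b) :
    ∃ u v, Rch T a u ∧ u < v ∧ (u, v) ∈ T ∧ Rch T v b ∧ P u ∧ ¬ P v := by
  induction h with
  | refl => exact absurd ha hb
  | @tail c d hc hs ih =>
    by_cases hPc : P c
    · exact ⟨c, d, hc, hs.1, hs.2, .refl, hPc, hb⟩
    · obtain ⟨u, v, h1, h2, h3, h4, h5, h6⟩ := ih hPc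
      exact ⟨u, v, h1, h2, h3, h4.tail hs, h5, h6⟩

lemma Rch.cross {n : ℕ} {T : EdgeSet n} (hnc : Noncrossing T) {p q i k : Fin (n+1)}
    (h1 : Rch T p q) (h2 : Rch T i k) (hpi : p ≤ i) (hiq : i ≤ q) (hqk : q ≤ k) :
    ∃ v, Rch T p v ∧ Rch T v q ∧ Rch T i v ∧ Rch T v k := by
  rcases hiq.eq_or_lt with rfl | hiq
  · exact ⟨i, h1, .refl, .refl, h2⟩
  obtain ⟨u, v, a1, a2, a3, a4, a5, a6⟩ := h1.step (fun x => x ≤ i) hpi (not_le.2 hiq)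
  simp only [not_le] at a6
  rcases a5.eq_or_lt with rfl | a5
  · exact ⟨u, a1, .head ⟨a2, a3⟩ a4, .refl, h2⟩
  obtain ⟨s, t, b1, b2, b3, b4, b5, b6⟩ := h2.step (fun x => x < v) a6
    (not_lt.2 (a4.le.trans hqk))
  simp only [not_lt] at b6
  rcases b6.eq_or_lt with rfl | b6
  · exact ⟨v, a1.tail ⟨a2, a3⟩, a4, b1.tail ⟨b2, b3⟩, b4⟩
  · exact absurd ⟨u, s, v, t, a5.trans_le b1.le, b5, b6, a3, b3⟩ hnc

lemma Rch.of_closure {n : ℕ} {T : EdgeSet n} {p : Edge n} (h : p ∈ closureT T) :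
    Rch T p.1 p.2 := h.2.to_reflTransGen

lemma mem_closure_of {n : ℕ} {T : EdgeSet n} {a b : Fin (n+1)} (h : Rch T a b) (hab : a < b) :
    (a, b) ∈ closureT T := by
  refine ⟨hab, ?_⟩
  rcases Relation.reflTransGen_iff_eq_or_transGen.1 h with h | h
  · exact absurd h hab.ne'
  · exact h

/-- cut lemma -/
lemma cut {n : ℕ} {B : EdgeSet n} (hB : IsTreeG B) (S : Set (Fin (n+1))) {u w : Fin (n+1)}
    (hu : u ∈ S) (hw : w ∉ S) :
    ∃ a b, (a, b) ∈ B ∧ a < b ∧ ((a ∈ S ∧ b ∉ S) ∨ (a ∉ S ∧ b ∈ S)) := by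
  obtain ⟨W⟩ := hB.2.1.preconnected u w
  obtain ⟨d, -, h1, h2⟩ := W.exists_boundary_dart S hu hw
  have := d.adj
  simp only [toSG, SimpleGraph.fromRel_adj] at this
  rcases this.2 with h | h
  · exact ⟨_, _, h, hB.1 _ h, .inl ⟨h1, h2⟩⟩
  · exact ⟨_, _, h, hB.1 _ h, .inr ⟨h2, h1⟩⟩

lemma exists_max {n : ℕ} (P : Fin (n+1) → Prop) (h : ∃ x, P x) : ∃ x, P x ∧ ∀ y, P y → y ≤ x := by
  classical
  obtain ⟨x, hx, hm⟩ := (Finset.univ.filter P).exists_max_image id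
    (by obtain ⟨x, hx⟩ := h; exact ⟨x, by simp [hx]⟩)
  exact ⟨x, by simpa using hx, fun y hy => hm y (by simp [hy])⟩

lemma exists_min {n : ℕ} (P : Fin (n+1) → Prop) (h : ∃ x, P x) : ∃ x, P x ∧ ∀ y, P y → x ≤ y := by
  classical
  obtain ⟨x, hx, hm⟩ := (Finset.univ.filter P).exists_min_image id
    (by obtain ⟨x, hx⟩ := h; exact ⟨x, by simp [hx]⟩)
  exact ⟨x, by simpa using hx, fun y hy => hm y (by simp [hy])⟩

lemma nc' {n : ℕ} {B : EdgeSet n} (h : Noncrossing B) {i j k l : Fin (n+1)} (h1 : (i, k) ∈ B)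
    (h2 : (j, l) ∈ B) (a : i < j) (b : j < k) (c : k < l) : False :=
  h ⟨i, j, k, l, a, b, c, h1, h2⟩

lemma alt' {n : ℕ} {B : EdgeSet n} (hB : IsGraph B) (h : Alternating B) {i j k : Fin (n+1)}
    (h1 : (i, j) ∈ B) (h2 : (j, k) ∈ B) : False :=
  h ⟨i, j, k, hB _ h1, hB _ h2, h1, h2⟩

lemma iso {n : ℕ} {B : EdgeSet n} (hB : IsTreeG B) (hnc : Noncrossing B) (hal : Alternating B)
    (u : Fin (n+1)) : ∃ s, u ≤ s ∧ (s = u ∨ (u, s) ∈ B) ∧ (∀ b, (u, b) ∈ B → b ≤ s) ∧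
      ∀ w, w < u ∨ s < w → ∃ a, a < u ∧ (a, s) ∈ B := by
  obtain ⟨s, hs, hm⟩ := exists_max (fun x => x = u ∨ (u, x) ∈ B) ⟨u, .inl rfl⟩
  have hus : u ≤ s := hm u (.inl rfl)
  refine ⟨s, hus, hs, fun b hb => hm b (.inr hb), fun w hw => ?_⟩
  obtain ⟨a, b, hab, hlt, h⟩ := cut hB (Set.Icc u s) (u := u) (w := w) ⟨le_rfl, hus⟩
    (by rintro ⟨h1, h2⟩; rcases hw with h | h <;> order)
  simp only [Set.mem_Icc, not_and_or, not_le] at h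
  have hout : ∀ b, (s, b) ∈ B → b ≤ s := by
    intro b hb
    rcases hs with rfl | hs
    · exact hm b (.inr hb)
    · exact (alt' hB.1 hal hs hb).elim
  rcases h with ⟨⟨h1, h2⟩, h3⟩ | ⟨h3, h1, h2⟩
  · have hsb : s < b := by rcases h3 with h | h <;> order
    rcases h1.eq_or_lt with rfl | h1
    · exact absurd (hm b (.inr hab)) (by order)
    rcases h2.eq_or_lt with rfl | h2
    · exact absurd (hout b hab) (by order)
    rcases hs with rfl | hs
    · order
    · exact (nc' hnc hs hab h1 h2 hsb).elim
  · have hau : a < u := by rcases h3 with h | h <;> order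
    rcases h2.eq_or_lt with rfl | h2
    · exact ⟨a, hau, hab⟩
    rcases hs with rfl | hs
    · order
    rcases h1.eq_or_lt with rfl | h1
    · exact (alt' hB.1 hal hab hs).elim
    · exact (nc' hnc hab hs hau h1 h2).elim

/-- gap lemma: `k` is the largest left-child endpoint. -/
lemma gap {n : ℕ} {B : EdgeSet n} (hB : IsTreeG B) (hnc : Noncrossing B) (hal : Alternating B)
    {i j k u : Fin (n+1)} (hij : (i, j) ∈ B) (hk : k = i ∨ (i, k) ∈ B)
    (hkm : ∀ b, (i, b) ∈ B → b < j → b ≤ k) (hku : (u : ℕ) = k + 1) (huj : u < j) :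
    (u, j) ∈ B := by
  have hik : i ≤ k := by
    rcases hk with h | h
    · exact h.ge
    · exact (hB.1 _ h).le
  have hku' : k < u := by rw [Fin.lt_def]; omega
  have hle : ∀ a, a < u → a ≤ k := fun a ha => by rw [Fin.lt_def] at ha; rw [Fin.le_def]; omega
  obtain ⟨s, h1, h2, h3, h4⟩ := iso hB hnc hal u
  obtain ⟨a, ha, has⟩ := h4 k (.inl hku')
  have hsj : s ≤ j := by
    by_contra hc
    push Not at hc
    rcases h2 with rfl | h2
    · order
    · exact nc' hnc hij h2 (by order) huj hc
  rcases hsj.eq_or_lt with rfl | hsj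
  · rcases h2 with rfl | h2
    · order
    · exact h2
  exfalso
  have hak := hle a ha
  rcases lt_trichotomy a i with h | rfl | h
  · exact nc' hnc has hij h (by order) hsj
  · exact absurd (hkm s has hsj) (by order)
  · rcases hk with rfl | hk
    · order
    rcases hak.eq_or_lt with rfl | hak
    · exact alt' hB.1 hal hk has
    · exact nc' hnc hk has h hak (by order)

lemma card_edgeSet {n : ℕ} {E : EdgeSet n} (hE : IsGraph E) :
    Nat.card (toSG E).edgeSet = E.card := by
  have h : (toSG E).edgeSet = ((E.image (fun e => s(e.1, e.2)) : Finset (Sym2 (Fin (n+1)))) :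
      Set (Sym2 (Fin (n+1)))) := by
    ext z
    induction z using Sym2.ind with
    | _ a b =>
      simp only [SimpleGraph.mem_edgeSet, toSG, SimpleGraph.fromRel_adj, Finset.coe_image,
        Set.mem_image, Finset.mem_coe]
      constructor
      · rintro ⟨_, h | h⟩
        · exact ⟨_, h, rfl⟩
        · exact ⟨_, h, Sym2.eq_swap⟩
      · rintro ⟨⟨c, d⟩, h, h2⟩
        have hlt := hE _ h
        rcases Sym2.eq_iff.1 h2 with ⟨rfl, rfl⟩ | ⟨rfl, rfl⟩
        · exact ⟨hlt.ne, .inl h⟩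
        · exact ⟨hlt.ne', .inr h⟩
  rw [h, Nat.card_coe_set_eq, Set.ncard_coe_finset, Finset.card_image_of_injOn]
  rintro ⟨a, b⟩ h1 ⟨c, d⟩ h2 h3
  have l1 := hE _ h1
  have l2 := hE _ h2
  rcases Sym2.eq_iff.1 h3 with ⟨rfl, rfl⟩ | ⟨rfl, rfl⟩
  · rfl
  · exact absurd l1 (not_lt.2 l2.le)

lemma tree_swap {n : ℕ} {B : EdgeSet n} (hB : IsTreeG B) {e f : Edge n} (he : e ∈ B) (hf : f ∉ B)
    (hfl : f.1 < f.2) (hr : (toSG (insert f (B.erase e))).Reachable e.1 e.2) :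
    IsTreeG (insert f (B.erase e)) := by
  have hG : IsGraph (insert f (B.erase e)) := by
    intro g hg
    rcases Finset.mem_insert.1 hg with rfl | hg
    · exact hfl
    · exact hB.1 _ (Finset.mem_of_mem_erase hg)
  refine ⟨hG, ?_⟩
  have h0 := SimpleGraph.isTree_iff_connected_and_card.1 hB.2
  rw [card_edgeSet hB.1] at h0
  rw [SimpleGraph.isTree_iff_connected_and_card, card_edgeSet hG]
  refine ⟨?_, ?_⟩
  · have key : ∀ a b, (a, b) ∈ B → (toSG (insert f (B.erase e))).Reachable a b := by
      intro a b hab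
      by_cases h : (a, b) = e
      · subst h; exact hr
      · refine SimpleGraph.Adj.reachable ?_
        simp only [toSG, SimpleGraph.fromRel_adj]
        exact ⟨(hB.1 _ hab).ne, .inl (by simp [h, hab])⟩
    haveI := h0.1.nonempty
    refine ⟨fun u v => ?_⟩
    obtain ⟨W⟩ := h0.1.preconnected u v
    induction W with
    | nil => exact .refl _
    | cons hadj _ ih =>
      refine .trans ?_ ih
      simp only [toSG, SimpleGraph.fromRel_adj] at hadj
      rcases hadj.2 with h | h
      · exact key _ _ h
      · exact (key _ _ h).symm
  · rw [Finset.card_insert_of_notMem (by simp [hf]), Finset.card_erase_of_mem he]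
    have := Finset.card_pos.2 ⟨e, he⟩
    omega

lemma flip {n : ℕ} {T A B : EdgeSet n} (hnc : Noncrossing T)
    (hA : A ∈ NCASpanningTrees T) (hB : B ∈ NCASpanningTrees T) (hlt : treeLexLT A B) :
    ∃ e ∈ B, e ∉ A ∧ ∃ C ∈ NCASpanningTrees T, B.erase e ⊆ C ∧ treeLexLT C B := by
  classical
  obtain ⟨hAt, hAn, hAa, hAT⟩ := hA
  obtain ⟨hBt, hBn, hBa, hBT⟩ := hB
  obtain ⟨⟨p, q⟩, hpA, hpB, hmin⟩ := hlt
  have hpq : p < q := hAt.1 _ hpA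
  have agree : ∀ a b, a < p → (a, b) ∈ B → (a, b) ∈ A := by
    intro a b hap hb
    by_contra hna
    rcases hmin (a, b) (by simp [hb, hna]) with h | h <;> simp at h <;> order
  -- step 1
  have ex1 : ∃ j, (p, j) ∈ B ∧ q < j := by
    obtain ⟨s, h1, h2, h3, h4⟩ := iso hBt hBn hBa p
    rcases lt_trichotomy q s with h | rfl | h
    · rcases h2 with rfl | h2
      · order
      · exact ⟨s, h2, h⟩
    · rcases h2 with rfl | h2
      · order
      · exact absurd h2 hpB
    · obtain ⟨a, ha, has⟩ := h4 q (.inr h)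
      have hasA := agree _ _ ha has
      rcases h1.eq_or_lt with rfl | h1
      · exact (alt' hAt.1 hAa hasA hpA).elim
      · exact (nc' hAn hasA hpA ha h1 h).elim
  obtain ⟨j, ⟨hpj, hqj⟩, hjm⟩ := exists_min _ ex1
  -- step 2
  have ex2 : ∃ i, p < i ∧ i ≤ q ∧ (i, j) ∈ B := by
    obtain ⟨k, hk, hkm⟩ := exists_max (fun x => x = p ∨ ((p, x) ∈ B ∧ x < j)) ⟨p, .inl rfl⟩
    have hpk : p ≤ k := hkm p (.inl rfl)
    have hkq : k < q := by
      rcases hk with rfl | ⟨h1, h2⟩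
      · exact hpq
      · by_contra hc
        rcases (not_lt.1 hc).eq_or_lt with rfl | h
        · exact hpB h1
        · exact absurd (hjm k ⟨h1, h⟩) (by order)
    have hk1 : (k : ℕ) + 1 < n + 1 := by have := q.2; rw [Fin.lt_def] at hkq; omega
    have hu1 : k < ⟨k + 1, hk1⟩ := by rw [Fin.lt_def]; simp
    have hu2 : (⟨k + 1, hk1⟩ : Fin (n+1)) ≤ q := by rw [Fin.le_def]; exact hkq
    refine ⟨⟨k + 1, hk1⟩, by order, hu2, ?_⟩
    exact gap hBt hBn hBa hpj (hk.imp id (·.1)) (fun b hb hbj => hkm b (.inr ⟨hb, hbj⟩)) rfl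
      (by order)
  obtain ⟨i, ⟨hpi, hiq, hij⟩, him⟩ := exists_max _ ex2
  obtain ⟨i', ⟨hi'i, hi'j⟩, hi'm⟩ := exists_max (fun x => x < i ∧ (x, j) ∈ B) ⟨p, hpi, hpj⟩
  have hpi' : p ≤ i' := hi'm p ⟨hpi, hpj⟩
  obtain ⟨k, hk, hkm⟩ := exists_max (fun x => x = i ∨ ((i, x) ∈ B ∧ x < j)) ⟨i, .inl rfl⟩
  have hik : i ≤ k := hkm i (.inl rfl)
  have hkj : k < j := by rcases hk with rfl | h; · order
                         · exact h.2
  have hkB : k = i ∨ (i, k) ∈ B := hk.imp id (·.1)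
  have hkm' : ∀ b, (i, b) ∈ B → b < j → b ≤ k := fun b hb hbj => hkm b (.inr ⟨hb, hbj⟩)
  have hqk : q ≤ k := by
    by_contra hc
    push Not at hc
    have hk1 : (k : ℕ) + 1 < n + 1 := by have := q.2; rw [Fin.lt_def] at hc; omega
    have hu1 : k < ⟨k + 1, hk1⟩ := by rw [Fin.lt_def]; simp
    have hu2 : (⟨k + 1, hk1⟩ : Fin (n+1)) ≤ q := by rw [Fin.le_def]; exact hc
    have := him ⟨k + 1, hk1⟩ ⟨by order, hu2,
      gap hBt hBn hBa hij hkB hkm' rfl (by order)⟩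
    order
  have hi'k : i' < k := by order
  -- new edge
  have hnew : (i', k) ∉ B := by
    intro h
    rcases hik.eq_or_lt with rfl | hik
    · exact alt' hBt.1 hBa h hij
    · exact nc' hBn h hij hi'i hik hkj
  have heA : (i, j) ∉ A := by
    intro h
    rcases hiq.eq_or_lt with rfl | hiq
    · exact alt' hAt.1 hAa hpA h
    · exact nc' hAn hpA h hpi hiq hqj
  have hreach : Rch T i' k := by
    obtain ⟨v, -, h1, h2, -⟩ := Rch.cross hnc (Rch.of_closure (hAT hpA))
      (Rch.of_closure (hBT hi'j)) hpi' (by simp only; order) (by simp only; order)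
    have hik' : Rch T i k := by
      rcases hkB with rfl | h
      · exact .refl
      · exact Rch.of_closure (hBT h)
    obtain ⟨v, h3, -, -, h4⟩ := Rch.cross hnc (h2.trans h1) hik' (by order) hiq hqk
    exact h3.trans h4
  refine ⟨(i, j), hij, heA, insert (i', k) (B.erase (i, j)), ⟨?_, ?_, ?_, ?_⟩,
    Finset.subset_insert _ _, ?_⟩
  · refine tree_swap hBt hij hnew hi'k ?_
    have hadj : ∀ a b, a < b → (a, b) ∈ insert (i', k) (B.erase (i, j)) →
        (toSG (insert (i', k) (B.erase (i, j)))).Reachable a b := by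
      intro a b hab h
      refine SimpleGraph.Adj.reachable ?_
      simp only [toSG, SimpleGraph.fromRel_adj]
      exact ⟨hab.ne, .inl h⟩
    have r1 := hadj i' k hi'k (by simp)
    have r2 := hadj i' j (by order) (by simp [hi'j, hi'i.ne])
    have r3 : (toSG (insert (i', k) (B.erase (i, j)))).Reachable i k := by
      rcases hkB with h | h
      · rw [h]
      · exact hadj i k (hBt.1 _ h) (by simp [h, hkj.ne])
    exact (r3.trans r1.symm).trans r2
  · have c1 : ∀ a b, (a, b) ∈ B → (a, b) ≠ (i, j) → i' < a → a < k → k < b → False := by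
      intro a b hab hne h1 h2 h3
      have hbj : b ≤ j := by
        by_contra hc
        exact nc' hBn hi'j hab h1 (by order) (not_le.1 hc)
      rcases hbj.eq_or_lt with rfl | hbj
      · have hai : i < a := by
          rcases lt_trichotomy a i with h | rfl | h
          · exact absurd (hi'm a ⟨h, hab⟩) (by order)
          · exact absurd rfl hne
          · exact h
        rcases hkB with rfl | hkB
        · order
        · exact nc' hBn hkB hab hai h2 h3
      · rcases lt_trichotomy a i with h | rfl | h
        · exact nc' hBn hab hij h (by order) hbj
        · exact absurd (hkm' b hab hbj) (by order)
        · rcases hkB with rfl | hkB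
          · order
          · exact nc' hBn hkB hab h h2 h3
    have c2 : ∀ a b, (a, b) ∈ B → a < i' → i' < b → b < k → False := by
      intro a b hab h1 h2 h3
      exact nc' hBn hab hi'j h1 h2 (by order)
    rintro ⟨a, b, c, d, hab, hbc, hcd, h1, h2⟩
    simp only [Finset.mem_insert, Finset.mem_erase] at h1 h2
    rcases h1 with h1 | ⟨h1', h1⟩ <;> rcases h2 with h2 | ⟨h2', h2⟩
    · simp only [Prod.mk.injEq] at h1 h2
      obtain ⟨rfl, rfl⟩ := h1
      obtain ⟨rfl, rfl⟩ := h2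
      order
    · simp only [Prod.mk.injEq] at h1
      obtain ⟨rfl, rfl⟩ := h1
      exact c1 _ _ h2 h2' hab hbc hcd
    · simp only [Prod.mk.injEq] at h2
      obtain ⟨rfl, rfl⟩ := h2
      exact c2 _ _ h1 hab hbc hcd
    · exact nc' hBn h1 h2 hab hbc hcd
  · rintro ⟨a, b, c, hab, hbc, h1, h2⟩
    simp only [Finset.mem_insert, Finset.mem_erase] at h1 h2
    rcases h1 with h1 | ⟨h1', h1⟩ <;> rcases h2 with h2 | ⟨h2', h2⟩
    · simp only [Prod.mk.injEq] at h1 h2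
      obtain ⟨rfl, rfl⟩ := h1
      obtain ⟨rfl, rfl⟩ := h2
      order
    · simp only [Prod.mk.injEq] at h1
      obtain ⟨rfl, rfl⟩ := h1
      rcases hkB with rfl | hkB
      · rcases lt_trichotomy c j with h | rfl | h
        · exact absurd (hkm' c h2 h) (by order)
        · exact h2' rfl
        · exact nc' hBn hi'j h2 hab (by order) h
      · exact alt' hBt.1 hBa hkB h2
    · simp only [Prod.mk.injEq] at h2
      obtain ⟨rfl, rfl⟩ := h2
      exact alt' hBt.1 hBa h1 hi'j
    · exact alt' hBt.1 hBa h1 h2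
  · intro g hg
    simp only [Finset.coe_insert, Set.mem_insert_iff, Finset.mem_coe, Finset.mem_erase] at hg
    rcases hg with rfl | ⟨-, hg⟩
    · exact mem_closure_of hreach hi'k
    · exact hBT hg
  · refine ⟨(i', k), by simp, hnew, ?_⟩
    intro g hg
    simp only [Finset.mem_union, Finset.mem_sdiff, Finset.mem_insert, Finset.mem_erase] at hg
    by_cases h1 : g = (i', k)
    · subst h1; exact .inr ⟨rfl, le_rfl⟩
    · by_cases h2 : g = (i, j)
      · subst h2; exact .inl hi'i
      · tauto

lemma lex_asymm {n : ℕ} {A B : EdgeSet n} (h1 : treeLexLT A B) (h2 : treeLexLT B A) : False := by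
  obtain ⟨e, he, he', hm⟩ := h1
  obtain ⟨f, hf, hf', hm'⟩ := h2
  have a := hm f (by simp [hf, hf'])
  have b := hm' e (by simp [he, he'])
  have : e = f := by
    unfold edgeLE at a b
    apply Prod.ext <;> rcases a with a | a <;> rcases b with b | b <;> (try have := a.1) <;>
      (try have := a.2) <;> (try have := b.1) <;> (try have := b.2) <;> order
  subst this
  exact he' hf

/-! Linear part -/

lemma sum_apply' {n : ℕ} (c : Edge n → ℝ) (i : Fin (n+1)) :
    (∑ e, c e • ev e.1 e.2) i = ∑ l, c (i, l) - ∑ l, c (l, i) := by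
  rw [Finset.sum_apply, Fintype.sum_prod_type]
  simp only [ev, Pi.smul_apply, Pi.sub_apply, smul_eq_mul, mul_sub, Finset.sum_sub_distrib]
  congr 1
  · rw [Finset.sum_eq_single i]
    · simp
    · intro b _ hb; simp [Pi.single_apply, hb.symm]
    · simp
  · refine Finset.sum_congr rfl fun a _ => ?_
    rw [Finset.sum_eq_single i]
    · simp
    · intro b _ hb; simp [Pi.single_apply, hb.symm]
    · simp

lemma out_eq {n : ℕ} {A : EdgeSet n} (hA : IsGraph A) (hal : Alternating A) {c : Edge n → ℝ}
    (hc : ∀ e, 0 ≤ c e) (h0 : ∀ e ∉ A, c e = 0) {i : Fin (n+1)}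
    (hi : 0 < (∑ e, c e • ev e.1 e.2) i) :
    (∑ e, c e • ev e.1 e.2) i = ∑ l, c (i, l) := by
  rw [sum_apply'] at *
  have : ∃ l, c (i, l) ≠ 0 := by
    by_contra hcon
    push Not at hcon
    have h1 : ∑ l, c (i, l) = 0 := Finset.sum_eq_zero fun l _ => hcon l
    have h2 : 0 ≤ ∑ l, c (l, i) := Finset.sum_nonneg fun l _ => hc _
    linarith
  obtain ⟨l, hl⟩ := this
  have hl : (i, l) ∈ A := by by_contra h; exact hl (h0 _ h)
  rw [Finset.sum_eq_zero (f := fun l => c (l, i)), sub_zero]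
  intro m _
  exact h0 _ fun h => alt' hA hal h hl

lemma in_eq {n : ℕ} {A : EdgeSet n} (hA : IsGraph A) (hal : Alternating A) {c : Edge n → ℝ}
    (hc : ∀ e, 0 ≤ c e) (h0 : ∀ e ∉ A, c e = 0) {i : Fin (n+1)}
    (hi : (∑ e, c e • ev e.1 e.2) i < 0) :
    (∑ e, c e • ev e.1 e.2) i = - ∑ l, c (l, i) := by
  rw [sum_apply'] at *
  have : ∃ l, c (l, i) ≠ 0 := by
    by_contra hcon
    push Not at hcon
    have h1 : ∑ l, c (l, i) = 0 := Finset.sum_eq_zero fun l _ => hcon l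
    have h2 : 0 ≤ ∑ l, c (i, l) := Finset.sum_nonneg fun l _ => hc _
    linarith
  obtain ⟨l, hl⟩ := this
  have hl : (l, i) ∈ A := by by_contra h; exact hl (h0 _ h)
  rw [Finset.sum_eq_zero (f := fun l => c (i, l)), zero_sub]
  intro m _
  exact h0 _ fun h => alt' hA hal hl h

lemma sgn {n : ℕ} {A : EdgeSet n} (hA : IsGraph A) (hal : Alternating A) {c : Edge n → ℝ}
    (hc : ∀ e, 0 ≤ c e) (h0 : ∀ e ∉ A, c e = 0) {i j : Fin (n+1)} (hij : 0 < c (i, j)) :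
    0 < (∑ e, c e • ev e.1 e.2) i ∧ (∑ e, c e • ev e.1 e.2) j < 0 := by
  have hl : (i, j) ∈ A := by by_contra h; exact hij.ne' (h0 _ h)
  rw [sum_apply', sum_apply']
  constructor
  · rw [Finset.sum_eq_zero (f := fun l => c (l, i)), sub_zero]
    · exact Finset.sum_pos' (fun _ _ => hc _) ⟨j, by simp, hij⟩
    · intro m _
      exact h0 _ fun h => alt' hA hal h hl
  · rw [Finset.sum_eq_zero (f := fun l => c (j, l)), zero_sub, neg_lt_zero]
    · exact Finset.sum_pos' (fun _ _ => hc _) ⟨i, by simp, hij⟩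
    · intro m _
      exact h0 _ fun h => alt' hA hal hl h

lemma uniq_aux {n : ℕ} {A B : EdgeSet n} (hA : IsGraph A) (hal : Alternating A)
    (hAn : Noncrossing A) (hB : IsGraph B) (hbl : Alternating B)
    {a b : Edge n → ℝ} (ha : ∀ e, 0 ≤ a e) (ha0 : ∀ e ∉ A, a e = 0)
    (hb : ∀ e, 0 ≤ b e) (hb0 : ∀ e ∉ B, b e = 0)
    (heq : ∑ e, a e • ev e.1 e.2 = ∑ e, b e • ev e.1 e.2) (i j : Fin (n+1)) 
    (hsh : ∀ i' j' : Fin (n+1), i ≤ i' → j' ≤ j → (i', j') ≠ (i, j) → a (i', j') = b (i', j')) :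
    b (i, j) ≤ a (i, j) := by
  by_contra hlt
  push Not at hlt
  have hbp : 0 < b (i, j) := (ha _).trans_lt hlt
  have hijB : (i, j) ∈ B := by by_contra h; exact hbp.ne' (hb0 _ h)
  have hij := hB _ hijB
  obtain ⟨s1, s2⟩ := sgn hB hbl hb hb0 hbp
  have e1 := out_eq hB hbl hb hb0 s1
  have e2 := in_eq hB hbl hb hb0 s2
  rw [← heq] at s1 s2 e1 e2
  rw [out_eq hA hal ha ha0 s1] at e1
  rw [in_eq hA hal ha ha0 s2] at e2
  have f1 : ∃ l, j < l ∧ (i, l) ∈ A := by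
    by_contra hcon
    push Not at hcon
    refine absurd e1 (ne_of_lt (Finset.sum_lt_sum (fun l _ => ?_) ⟨j, by simp, hlt⟩))
    rcases lt_trichotomy l j with h | rfl | h
    · exact (hsh i l le_rfl h.le (by simp [h.ne])).le
    · exact hlt.le
    · rw [ha0 _ (hcon l h)]; exact hb _
  have f2 : ∃ l, l < i ∧ (l, j) ∈ A := by
    by_contra hcon
    push Not at hcon
    refine absurd (neg_injective e2)
      (ne_of_lt (Finset.sum_lt_sum (fun l _ => ?_) ⟨i, by simp, hlt⟩))
    rcases lt_trichotomy l i with h | rfl | h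
    · rw [ha0 _ (hcon l h)]; exact hb _
    · exact hlt.le
    · exact (hsh l j h.le le_rfl (by simp [h.ne'])).le
  obtain ⟨l, hl, hl'⟩ := f1
  obtain ⟨m, hm, hm'⟩ := f2
  exact nc' hAn hm' hl' hm hij hl

lemma uniq {n : ℕ} {A B : EdgeSet n} (hA : IsGraph A) (hal : Alternating A)
    (hAn : Noncrossing A) (hB : IsGraph B) (hbl : Alternating B) (hBn : Noncrossing B)
    {a b : Edge n → ℝ} (ha : ∀ e, 0 ≤ a e) (ha0 : ∀ e ∉ A, a e = 0)
    (hb : ∀ e, 0 ≤ b e) (hb0 : ∀ e ∉ B, b e = 0)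
    (heq : ∑ e, a e • ev e.1 e.2 = ∑ e, b e • ev e.1 e.2) : a = b := by
  have key : ∀ d : ℕ, ∀ i j : Fin (n+1), (j : ℕ) + (n - i) = d → a (i, j) = b (i, j) := by
    intro d
    induction d using Nat.strong_induction_on with
    | _ d ih =>
      intro i j hd
      have hsh : ∀ i' j' : Fin (n+1), i ≤ i' → j' ≤ j → (i', j') ≠ (i, j) →
          a (i', j') = b (i', j') := by
        intro i' j' h1 h2 h3
        refine ih _ ?_ i' j' rfl
        have h3 : ¬ ((i' : ℕ) = i ∧ (j' : ℕ) = j) := by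
          rintro ⟨h, h'⟩; exact h3 (Prod.ext (Fin.ext h) (Fin.ext h'))
        rw [Fin.le_def] at h1 h2
        have := i.2
        have := i'.2
        omega
      refine le_antisymm ?_ ?_
      · exact uniq_aux hB hbl hBn hA hal hb hb0 ha ha0 heq.symm i j
          fun i' j' h1 h2 h3 => (hsh i' j' h1 h2 h3).symm
      · exact uniq_aux hA hal hAn hB hbl ha ha0 hb hb0 heq i j hsh
  funext ⟨i, j⟩
  exact key _ i j rfl

lemma rootPoly_iff {n : ℕ} {F : EdgeSet n} (hF : IsGraph F) (hal : Alternating F) (x : Vtype n) :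
    x ∈ RootPoly F ↔ ∃ c : Edge n → ℝ, (∀ e, 0 ≤ c e) ∧ (∀ e ∉ F, c e = 0) ∧ ∑ e, c e ≤ 1 ∧
      x = ∑ e, c e • ev e.1 e.2 := by
  classical
  constructor
  · intro hx
    refine convexHull_min (t := {x | ∃ c : Edge n → ℝ, (∀ e, 0 ≤ c e) ∧ (∀ e ∉ F, c e = 0) ∧
      ∑ e, c e ≤ 1 ∧ x = ∑ e, c e • ev e.1 e.2}) ?_ ?_ hx
    · rintro y (rfl | ⟨⟨i, j, hij, rfl⟩, c, hc, hy⟩)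
      · exact ⟨0, by simp, by simp, by simp, by simp⟩
      · set c' : Edge n → ℝ := fun e => if e ∈ F then c e else 0 with hc'
        have hc'n : ∀ e, 0 ≤ c' e := fun e => by
          simp only [hc']; split_ifs
          · exact hc e
          · exact le_rfl
        have hc'0 : ∀ e ∉ F, c' e = 0 := fun e he => by simp [hc', he]
        have hy' : ev i j = ∑ e, c' e • ev e.1 e.2 := by
          rw [hy]; simp [hc', Finset.sum_ite_mem, ite_smul]
        have hi : 0 < (∑ e, c' e • ev e.1 e.2) i := by
          rw [← hy']; simp [ev, Pi.single_apply, hij.ne]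
        have hsum := out_eq hF hal hc'n hc'0 hi
        have : ∃ l, 0 < c' (i, l) := by
          by_contra hcon
          push Not at hcon
          have := Finset.sum_nonpos (s := Finset.univ) (fun l _ => hcon l)
          linarith
        obtain ⟨l, hl⟩ := this
        have hs := (sgn hF hal hc'n hc'0 hl).2
        rw [← hy'] at hs
        have hlj : l = j := by
          by_contra hne
          simp only [ev, Pi.sub_apply, Pi.single_apply, hne, if_false, sub_zero] at hs
          split_ifs at hs <;> linarith
        subst hlj
        have hmem : (i, l) ∈ F := by by_contra h; exact hl.ne' (hc'0 _ h)
        refine ⟨Pi.single (i, l) 1, fun e => ?_, fun e he => ?_, ?_, ?_⟩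
        · simp only [Pi.single_apply]; split_ifs <;> norm_num
        · rw [Pi.single_apply, if_neg]; rintro rfl; exact he hmem
        · simp
        · simp [Pi.single_apply, ite_smul]
    · rintro y ⟨c, c1, c2, c3, rfl⟩ z ⟨d, d1, d2, d3, rfl⟩ s t hs ht hst
      refine ⟨fun e => s * c e + t * d e, fun e => ?_, fun e he => ?_, ?_, ?_⟩
      · have := c1 e; have := d1 e; positivity
      · simp [c2 e he, d2 e he]
      · rw [Finset.sum_add_distrib, ← Finset.mul_sum, ← Finset.mul_sum]
        nlinarith
      · simp only [add_smul, Finset.sum_add_distrib, mul_smul, Finset.smul_sum]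
  · rintro ⟨c, c1, c2, c3, rfl⟩
    have h0 : (0 : Vtype n) ∈ RootPoly F := subset_convexHull _ _ (by simp)
    have hconv : Convex ℝ (RootPoly F) := convex_convexHull _ _
    have hv : ∀ e ∈ F, ev e.1 e.2 ∈ RootPoly F := by
      intro e he
      refine subset_convexHull _ _ (.inr ⟨⟨e.1, e.2, hF e he, rfl⟩, Pi.single e 1, fun f => ?_, ?_⟩)
      · simp only [Pi.single_apply]; split_ifs <;> norm_num
      · simp [Pi.single_apply, ite_smul, he]
    have := hconv.sum_mem (t := Finset.univ) (w := fun o : Option (Edge n) =>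
        o.elim (1 - ∑ e, c e) c)
      (z := fun o => o.elim 0 (fun e => if e ∈ F then ev e.1 e.2 else 0)) ?_ ?_ ?_
    · rw [Fintype.sum_option] at this
      convert this using 1
      simp only [Option.elim, smul_zero, zero_add]
      refine Finset.sum_congr rfl fun e _ => ?_
      by_cases he : e ∈ F
      · simp [he]
      · simp [he, c2 e he]
    · rintro (_ | e) _
      · simpa using c3
      · exact c1 e
    · rw [Fintype.sum_option]; simp
    · rintro (_ | e) _
      · exact h0
      · simp only [Option.elim]
        split_ifs with he
        · exact hv e he
        · exact h0

/- STATEMENT 17 -/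
theorem stmt17 {n : ℕ} (hn : 1 ≤ n) (T : EdgeSet n) (hT : IsTreeG T)
    (hnc : Noncrossing T) (k : ℕ) (Ts : Fin k → EdgeSet n)
    (hmem : ∀ m, Ts m ∈ NCASpanningTrees T)
    (huniq : ∀ F ∈ NCASpanningTrees T, ∃! m : Fin k, Ts m = F)
    (hord : ∀ m m' : Fin k, m < m' → treeLexLT (Ts m) (Ts m')) :
    ∀ m : Fin k, 0 < (m : ℕ) →
      ∃ Em : EdgeSet n, Em ⊆ Ts m ∧ Em.Nonempty ∧
        RootPoly (Ts m) ∩ (⋃ l : Fin k, ⋃ (_ : l < m), RootPoly (Ts l)) =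
          ⋃ e ∈ Em, RootPoly ((Ts m).erase e) := by
  classical
  intro m hm
  have hG : ∀ l, IsGraph (Ts l) := fun l => (hmem l).1.1
  have hN : ∀ l, Noncrossing (Ts l) := fun l => (hmem l).2.1
  have hAl : ∀ l, Alternating (Ts l) := fun l => (hmem l).2.2.1
  have hGe : ∀ l e, IsGraph ((Ts l).erase e) := fun l e g hg => hG l g (Finset.mem_of_mem_erase hg)
  have hAe : ∀ l e, Alternating ((Ts l).erase e) := by
    rintro l e ⟨i, j, k, h1, h2, h3, h4⟩
    exact hAl l ⟨i, j, k, h1, h2, Finset.mem_of_mem_erase h3, Finset.mem_of_mem_erase h4⟩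
  have key : ∀ l, l < m → ∃ e ∈ Ts m, e ∉ Ts l ∧ ∃ l', l' < m ∧ (Ts m).erase e ⊆ Ts l' := by
    intro l hl
    obtain ⟨e, he, he', C, hC, hsub, hlt⟩ := flip hnc (hmem l) (hmem m) (hord l m hl)
    obtain ⟨l', rfl, -⟩ := huniq C hC
    refine ⟨e, he, he', l', ?_, hsub⟩
    rcases lt_trichotomy l' m with h | rfl | h
    · exact h
    · exact (lex_asymm hlt hlt).elim
    · exact (lex_asymm hlt (hord _ _ h)).elim
  refine ⟨(Ts m).filter (fun e => ∃ l', l' < m ∧ (Ts m).erase e ⊆ Ts l'),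
    Finset.filter_subset _ _, ?_, ?_⟩
  · obtain ⟨e, he, -, h⟩ := key ⟨0, by omega⟩ (by rw [Fin.lt_def]; exact hm)
    exact ⟨e, by simp only [Finset.mem_filter]; exact ⟨he, h⟩⟩
  · ext x
    simp only [Set.mem_inter_iff, Set.mem_iUnion, Finset.mem_filter, exists_prop]
    constructor
    · rintro ⟨hx, l, hl, hxl⟩
      obtain ⟨e, he, he', h⟩ := key l hl
      refine ⟨e, ⟨he, h⟩, ?_⟩
      obtain ⟨b, b1, b2, b3, b4⟩ := (rootPoly_iff (hG m) (hAl m) x).1 hx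
      obtain ⟨a, a1, a2, a3, a4⟩ := (rootPoly_iff (hG l) (hAl l) x).1 hxl
      have hab := uniq (hG l) (hAl l) (hN l) (hG m) (hAl m) (hN m) a1 a2 b1 b2 (a4.symm.trans b4)
      subst hab
      refine (rootPoly_iff (hGe m e) (hAe m e) x).2 ⟨a, a1, fun f hf => ?_, a3, a4⟩
      by_cases hfe : f = e
      · subst hfe; exact a2 f he'
      · exact b2 f fun h => hf (Finset.mem_erase.2 ⟨hfe, h⟩)
    · rintro ⟨e, ⟨he, l, hl, hsub⟩, hx⟩
      obtain ⟨a, a1, a2, a3, a4⟩ := (rootPoly_iff (hGe m e) (hAe m e) x).1 hx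
      refine ⟨(rootPoly_iff (hG m) (hAl m) x).2 ⟨a, a1, fun f hf => a2 f fun h =>
        hf (Finset.mem_of_mem_erase h), a3, a4⟩, l, hl,
        (rootPoly_iff (hG l) (hAl l) x).2 ⟨a, a1, fun f hf => a2 f fun h => hf (hsub h), a3, a4⟩⟩

end RPaper
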